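/- Let A ∈ ℝ^{m×n} be partitioned in blocks A = [[A11, A12],[A21, A22]] with A11 ∈ ℝ^{k×k} invertible (any row/column permutations are absorbed into the partition), and let A_k = [[A11, A12],[A21, A21·A11⁻¹·A12]] be the rank-k approximant of the partial LU factorization. If A11 is a local maximum volume k×k submatrix of A, then for every 1 ≤ j ≤ k: (1/(1 + 5k√(mn)))·σ_j(A) ≤ σ_j(A_k) ≤ (1 + 5k√(mn))·σ_j(A). -/

import Mathlib

open Matrix

/-- The spectral norm (`‖·‖₂`, largest singular value) of a real matrix. -/
noncomputable def specNorm {m n : Type*} [Fintype m] [Fintype n] [DecidableEq n]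
    (A : Matrix m n ℝ) : ℝ :=
  ‖LinearMap.toContinuousLinearMap (Matrix.toEuclideanLin A)‖

/-- `sval A j` is the `j`-th largest singular value of `A` (1-indexed), characterized as the
distance, in the spectral norm, from `A` to the set of matrices of rank `< j`. -/
noncomputable def sval {m n : Type*} [Fintype m] [Fintype n] [DecidableEq n]
    (A : Matrix m n ℝ) (j : ℕ) : ℝ :=
  sInf {x : ℝ | ∃ B : Matrix m n ℝ, B.rank < j ∧ x = specNorm (A - B)}

/-- The volume of a matrix: the product of its singular values. -/
noncomputable def vol {m n : Type*} [Fintype m] [Fintype n] [DecidableEq n]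
    (A : Matrix m n ℝ) : ℝ :=
  ∏ j ∈ Finset.Icc 1 (min (Fintype.card m) (Fintype.card n)), sval A j

/-- `DiffOne b r` : `r` is an injective selection of indices whose image (index set)
differs from the index set selected by `b` in at most one element. -/
def DiffOne {ι α : Type*} [Fintype ι] [DecidableEq α] (b r : ι → α) : Prop :=
  Function.Injective r ∧ (Finset.univ.image r \ Finset.univ.image b).card ≤ 1


lemma specNorm_nonneg {m n : Type*} [Fintype m] [Fintype n] [DecidableEq n]
    (A : Matrix m n ℝ) : 0 ≤ specNorm A := norm_nonneg _

lemma specNorm_bound {m n : Type*} [Fintype m] [Fintype n] [DecidableEq n]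
    (A : Matrix m n ℝ) (x : EuclideanSpace ℝ n) :
    ‖Matrix.toEuclideanLin A x‖ ≤ specNorm A * ‖x‖ :=
  (LinearMap.toContinuousLinearMap (Matrix.toEuclideanLin A)).le_opNorm x

lemma specNorm_le {m n : Type*} [Fintype m] [Fintype n] [DecidableEq n]
    (A : Matrix m n ℝ) (c : ℝ) (hc : 0 ≤ c)
    (h : ∀ x, ‖Matrix.toEuclideanLin A x‖ ≤ c * ‖x‖) : specNorm A ≤ c :=
  ContinuousLinearMap.opNorm_le_bound _ hc h

lemma specNorm_add_le {m n : Type*} [Fintype m] [Fintype n] [DecidableEq n]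
    (A B : Matrix m n ℝ) : specNorm (A + B) ≤ specNorm A + specNorm B := by
  unfold specNorm
  rw [map_add, map_add]
  exact norm_add_le _ _

lemma le_specNorm {m n : Type*} [Fintype m] [Fintype n] [DecidableEq n]
    (A : Matrix m n ℝ) (c : ℝ) (x : EuclideanSpace ℝ n) (hx : x ≠ 0)
    (h : c * ‖x‖ ≤ ‖Matrix.toEuclideanLin A x‖) : c ≤ specNorm A := by
  have := h.trans (specNorm_bound A x)
  exact le_of_mul_le_mul_right this (norm_pos_iff.mpr hx)

lemma sval_le {m n : Type*} [Fintype m] [Fintype n] [DecidableEq n]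
    (A B : Matrix m n ℝ) (j : ℕ) (h : B.rank < j) : sval A j ≤ specNorm (A - B) := by
  apply csInf_le
  · refine ⟨0, ?_⟩
    rintro x ⟨B, _, rfl⟩
    exact specNorm_nonneg _
  · exact ⟨B, h, rfl⟩

lemma le_sval {m n : Type*} [Fintype m] [Fintype n] [DecidableEq n]
    (A : Matrix m n ℝ) (j : ℕ) (hj : 1 ≤ j) (c : ℝ)
    (h : ∀ B : Matrix m n ℝ, B.rank < j → c ≤ specNorm (A - B)) : c ≤ sval A j := by
  apply le_csInf
  · exact ⟨_, 0, by rw [Matrix.rank_zero]; omega, rfl⟩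
  · rintro x ⟨B, hB, rfl⟩
    exact h B hB

lemma sval_perturb {m n : Type*} [Fintype m] [Fintype n] [DecidableEq n]
    (A C : Matrix m n ℝ) (j : ℕ) (hj : 1 ≤ j) :
    sval A j ≤ sval C j + specNorm (A - C) := by
  rw [← sub_le_iff_le_add]
  apply le_sval C j hj
  intro B hB
  have h1 := sval_le A B j hB
  have h2 := specNorm_add_le (A - C) (C - B)
  rw [sub_add_sub_cancel] at h2
  linarith

lemma norm_toEuclideanLin_le {m n : Type*} [Fintype m] [Fintype n] [DecidableEq n]
    (A : Matrix m n ℝ) (c : ℝ) (hc : 0 ≤ c) (h : ∀ i j, |A i j| ≤ c) (x : EuclideanSpace ℝ n) :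
    ‖Matrix.toEuclideanLin A x‖ ≤ Real.sqrt (Fintype.card m * Fintype.card n) * c * ‖x‖ := by
  apply le_of_sq_le_sq _ (by positivity)
  rw [EuclideanSpace.real_norm_sq_eq, mul_pow, mul_pow, Real.sq_sqrt (by positivity)]
  have key : ∀ i, (Matrix.toEuclideanLin A x) i ^ 2 ≤ Fintype.card n * c ^ 2 * ‖x‖ ^ 2 := by
    intro i
    have e : (Matrix.toEuclideanLin A x) i = ∑ j, A i j * x j := by
      rw [Matrix.toLpLin_apply]; rfl
    rw [e, EuclideanSpace.real_norm_sq_eq]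
    refine (Finset.sum_mul_sq_le_sq_mul_sq _ _ _).trans ?_
    gcongr
    calc ∑ j, A i j ^ 2 ≤ ∑ j : n, c ^ 2 := by
          apply Finset.sum_le_sum
          intro j _
          rw [← sq_abs]
          gcongr
          exact h i j
      _ = _ := by simp
  calc _ ≤ ∑ i : m, (Fintype.card n * c ^ 2 * ‖x‖ ^ 2) := Finset.sum_le_sum fun i _ => key i
    _ = _ := by simp; ring

lemma rank_eq' {m n : Type*} [Fintype m] [Fintype n] [DecidableEq n] (B : Matrix m n ℝ) :
    B.rank = Module.finrank ℝ (LinearMap.range (Matrix.toEuclideanLin B)) := by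
  classical
  exact Matrix.rank_eq_finrank_range_toLin B (PiLp.basisFun 2 ℝ m) (PiLp.basisFun 2 ℝ n)

lemma norm_sq_T {k : ℕ} (T : EuclideanSpace ℝ (Fin k) →ₗ[ℝ] EuclideanSpace ℝ (Fin k))
    (hn : Module.finrank ℝ (EuclideanSpace ℝ (Fin k)) = k) (x : EuclideanSpace ℝ (Fin k)) :
    ‖T x‖ ^ 2 = ∑ i : Fin k, T.singularValues i ^ 2 *
      (inner ℝ (T.isSymmetric_adjoint_comp_self.eigenvectorBasis hn i) x) ^ 2 := by
  have hT := T.isSymmetric_adjoint_comp_self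
  have h1 : ‖T x‖ ^ 2 = inner ℝ ((LinearMap.adjoint T ∘ₗ T) x) x := by
    rw [LinearMap.comp_apply, LinearMap.adjoint_inner_left, real_inner_self_eq_norm_sq]
  rw [h1, ← (hT.eigenvectorBasis hn).sum_inner_mul_inner]
  apply Finset.sum_congr rfl
  intro i _
  rw [T.sq_singularValues_fin hn, hT, hT.apply_eigenvectorBasis, inner_smul_right,
    real_inner_comm x]
  simp only [RCLike.ofReal_real_eq_id, id_eq]
  ring

lemma inner_lc {k j : ℕ} (hj : j ≤ k)
    (v : OrthonormalBasis (Fin k) ℝ (EuclideanSpace ℝ (Fin k))) (c : Fin j → ℝ) (l : Fin k) :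
    inner ℝ (v l) (Fintype.linearCombination ℝ (fun i : Fin j => v (Fin.castLE hj i)) c)
      = if h : (l : ℕ) < j then c ⟨l, h⟩ else 0 := by
  rw [Fintype.linearCombination_apply, inner_sum]
  simp only [inner_smul_right, v.inner_eq_ite, mul_ite, mul_one, mul_zero]
  split_ifs with h
  · rw [Finset.sum_eq_single ⟨l, h⟩]
    · simp
    · intro b _ hb
      rw [if_neg]
      rintro rfl
      exact hb rfl
    · simp
  · apply Finset.sum_eq_zero
    intro i _
    rw [if_neg]
    rintro rfl
    exact h i.2

lemma sval_eq {k : ℕ} (M : Matrix (Fin k) (Fin k) ℝ) (j : ℕ) (hj : j < k) :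
    sval M (j + 1) = (Matrix.toEuclideanLin M).singularValues j := by
  set T := Matrix.toEuclideanLin M with hTdef
  have hn : Module.finrank ℝ (EuclideanSpace ℝ (Fin k)) = k := finrank_euclideanSpace_fin
  set v := T.isSymmetric_adjoint_comp_self.eigenvectorBasis hn with hv
  have hs := T.singularValues_nonneg
  have hanti := T.singularValues_antitone
  apply le_antisymm
  · let R : EuclideanSpace ℝ (Fin k) →ₗ[ℝ] (Fin j → ℝ) :=
      LinearMap.pi fun i => (innerₛₗ ℝ (v (Fin.castLE hj.le i)))
    let L := Fintype.linearCombination ℝ (fun i : Fin j => v (Fin.castLE hj.le i))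
    let B := Matrix.toEuclideanLin.symm (T ∘ₗ L ∘ₗ R)
    have hB : Matrix.toEuclideanLin B = T ∘ₗ L ∘ₗ R := LinearEquiv.apply_symm_apply _ _
    refine (sval_le M B (j + 1) ?_).trans ?_
    · rw [rank_eq', hB, ← LinearMap.comp_assoc, Nat.lt_succ_iff]
      refine (Submodule.finrank_mono (LinearMap.range_comp_le_range _ _)).trans ?_
      refine (LinearMap.finrank_range_le _).trans ?_
      simp
    · apply specNorm_le _ _ (hs j)
      intro x
      apply le_of_sq_le_sq _ (mul_nonneg (hs j) (norm_nonneg _))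
      have e : Matrix.toEuclideanLin (M - B) x = T (x - L (R x)) := by
        rw [map_sub, hB, map_sub]; rfl
      rw [e, norm_sq_T T hn, mul_pow, ← v.sum_sq_norm_inner_right x, Finset.mul_sum]
      apply Finset.sum_le_sum
      intro i _
      rw [← hv, inner_sub_right, inner_lc]
      split_ifs with h
      · have : R x ⟨i, h⟩ = inner ℝ (v i) x := rfl
        rw [this, sub_self]
        simp only [ne_eq, OfNat.ofNat_ne_zero, not_false_eq_true, zero_pow, mul_zero]
        positivity
      · rw [sub_zero, Real.norm_eq_abs, sq_abs]
        have := hanti (not_lt.mp h)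
        have := hs i
        gcongr
  · apply le_sval _ _ (by omega)
    intro B hB
    let L := Fintype.linearCombination ℝ (fun i : Fin (j+1) => v (Fin.castLE hj i))
    obtain ⟨c, hc, hc0⟩ := (Submodule.ne_bot_iff _).mp
      (LinearMap.ker_ne_bot_of_finrank_lt
        (f := (Matrix.toEuclideanLin B).rangeRestrict ∘ₗ L) (by
          rw [← rank_eq']; simpa using hB))
    have hBx : Matrix.toEuclideanLin B (L c) = 0 := by
      have := congrArg Subtype.val (LinearMap.mem_ker.mp hc)
      simpa using! this
    have hx : L c ≠ 0 := by
      intro h0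
      apply hc0
      funext i
      have := inner_lc hj v c (Fin.castLE hj i)
      rw [show Fintype.linearCombination ℝ (fun i : Fin (j+1) => v (Fin.castLE hj i)) c = 0
        from h0, inner_zero_right, dif_pos (by simpa using Nat.lt_succ_iff.mp i.2)] at this
      simpa using this.symm
    apply le_specNorm _ _ (L c) hx
    have e : Matrix.toEuclideanLin (M - B) (L c) = T (L c) := by
      rw [map_sub, LinearMap.sub_apply, hBx, sub_zero]
    rw [e]
    apply le_of_sq_le_sq _ (norm_nonneg _)
    rw [norm_sq_T T hn, mul_pow, ← v.sum_sq_norm_inner_right, Finset.mul_sum]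
    apply Finset.sum_le_sum
    intro i _
    rw [← hv, inner_lc, Real.norm_eq_abs, sq_abs]
    split_ifs with h
    · have := hanti (Nat.lt_succ_iff.mp h)
      have := hs j
      gcongr
    · simp

lemma vol_eq {k : ℕ} (M : Matrix (Fin k) (Fin k) ℝ) : vol M = |M.det| := by
  set T := Matrix.toEuclideanLin M with hTdef
  have hn : Module.finrank ℝ (EuclideanSpace ℝ (Fin k)) = k := finrank_euclideanSpace_fin
  have h1 : vol M = ∏ i : Fin k, T.singularValues i := by
    unfold vol
    rw [Fintype.card_fin, min_self, Fin.prod_univ_eq_prod_range (fun i => T.singularValues i)]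
    rw [← Finset.Ico_add_one_right_eq_Icc, Finset.prod_Ico_eq_prod_range]
    apply Finset.prod_congr (by simp)
    intro i hi
    rw [add_comm]
    exact sval_eq M i (by simpa using hi)
  have h0 : 0 ≤ vol M := by
    rw [h1]; exact Finset.prod_nonneg fun i _ => T.singularValues_nonneg i
  have h2 : vol M ^ 2 = M.det ^ 2 := by
    rw [h1, ← Finset.prod_pow]
    simp_rw [T.sq_singularValues_fin hn]
    have := T.isSymmetric_adjoint_comp_self.det_eq_prod_eigenvalues hn
    simp only [RCLike.ofReal_real_eq_id, id_eq] at this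
    rw [← this, hTdef, ← Matrix.toEuclideanLin_conjTranspose_eq_adjoint, LinearMap.det_comp]
    have hd : ∀ N : Matrix (Fin k) (Fin k) ℝ, LinearMap.det (Matrix.toEuclideanLin N) = N.det :=
      fun N => LinearMap.det_toLin (PiLp.basisFun 2 ℝ (Fin k)) N
    rw [hd, hd, Matrix.det_conjTranspose]
    simp [sq]
  rw [← abs_of_nonneg h0]
  exact (sq_eq_sq_iff_abs_eq_abs _ _).mp h2

lemma det_W {k : ℕ} (b : Fin k) (w : Fin k → ℝ) :
    ((1 : Matrix (Fin k) (Fin k) ℝ).updateRow b w).det = w b := by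
  have := Matrix.cramer_transpose_apply (1 : Matrix (Fin k) (Fin k) ℝ) w b
  rw [← this, Matrix.transpose_one, Matrix.cramer_one]
  rfl

lemma det_Z {k : ℕ} (a : Fin k) (z : Fin k → ℝ) :
    ((1 : Matrix (Fin k) (Fin k) ℝ).updateCol a z).det = z a := by
  have := Matrix.cramer_apply (1 : Matrix (Fin k) (Fin k) ℝ) z a
  rw [← this, Matrix.cramer_one]
  rfl

lemma adj_W {k : ℕ} (b i : Fin k) (w : Fin k → ℝ) :
    ((1 : Matrix (Fin k) (Fin k) ℝ).updateRow b w).adjugate i b = if i = b then 1 else 0 := by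
  rw [Matrix.adjugate_apply, Matrix.updateRow_idem, det_W]
  simp [Pi.single_apply, eq_comm]

lemma adj_Z {k : ℕ} (a i : Fin k) (z : Fin k → ℝ) :
    ((1 : Matrix (Fin k) (Fin k) ℝ).updateCol a z).adjugate a i = if a = i then 1 else 0 := by
  rw [← Matrix.transpose_transpose (((1 : Matrix (Fin k) (Fin k) ℝ).updateCol a z).adjugate),
    Matrix.transpose_apply, Matrix.adjugate_transpose, ← Matrix.updateRow_transpose,
    Matrix.transpose_one, adj_W]
  simp [eq_comm]

lemma diffOne_update {k m' : ℕ} (b : Fin k) (p : Fin m') :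
    DiffOne (Sum.inl : Fin k → Fin k ⊕ Fin m') (Function.update Sum.inl b (Sum.inr p)) := by
  constructor
  · intro i j h
    simp only [Function.update_apply] at h
    split_ifs at h with h1 h2 h2
    · rw [h1, h2]
    · simpa using h
  · haveI : Nonempty (Fin k ⊕ Fin m') := ⟨Sum.inl b⟩
    rw [Finset.card_le_one_iff_subset_singleton]
    refine ⟨Sum.inr p, ?_⟩
    intro x hx
    simp only [Finset.mem_sdiff, Finset.mem_image, Finset.mem_univ, true_and,
      Function.update_apply] at hx
    obtain ⟨⟨i, hi⟩, h⟩ := hx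
    split_ifs at hi
    · simp [← hi]
    · exact absurd ⟨i, hi⟩ h

lemma diffOne_self {k m' : ℕ} :
    DiffOne (Sum.inl : Fin k → Fin k ⊕ Fin m') Sum.inl :=
  ⟨Sum.inl_injective, by simp⟩

lemma row_swap {k m' n' : ℕ}
    (A11 : Matrix (Fin k) (Fin k) ℝ) (A12 : Matrix (Fin k) (Fin n') ℝ)
    (A21 : Matrix (Fin m') (Fin k) ℝ) (A22 : Matrix (Fin m') (Fin n') ℝ)
    (hinv : IsUnit A11.det) (b : Fin k) (p : Fin m') :
    ((Matrix.fromBlocks A11 A12 A21 A22).submatrix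
      (Function.update Sum.inl b (Sum.inr p)) Sum.inl).det = (A21 * A11⁻¹) p b * A11.det := by
  rw [← det_W b ((A21 * A11⁻¹) p), ← Matrix.det_mul]
  congr 1
  ext i j
  rw [Matrix.updateRow_mul, Matrix.one_mul, Matrix.updateRow_apply, Matrix.submatrix_apply,
    Function.update_apply]
  split_ifs with h
  · rw [← Matrix.mul_apply_eq_vecMul, Matrix.nonsing_inv_mul_cancel_right _ _ hinv]
    rfl
  · rfl

lemma col_swap {k m' n' : ℕ}
    (A11 : Matrix (Fin k) (Fin k) ℝ) (A12 : Matrix (Fin k) (Fin n') ℝ)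
    (A21 : Matrix (Fin m') (Fin k) ℝ) (A22 : Matrix (Fin m') (Fin n') ℝ)
    (hinv : IsUnit A11.det) (a : Fin k) (q : Fin n') :
    ((Matrix.fromBlocks A11 A12 A21 A22).submatrix
      Sum.inl (Function.update Sum.inl a (Sum.inr q))).det = A11.det * (A11⁻¹ * A12) a q := by
  rw [← det_Z a (fun i => (A11⁻¹ * A12) i q), ← Matrix.det_mul]
  congr 1
  ext i j
  rw [Matrix.mul_updateCol, Matrix.mul_one, Matrix.updateCol_apply, Matrix.submatrix_apply,
    Function.update_apply]
  split_ifs with h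
  · have : (A11 *ᵥ fun i => (A11⁻¹ * A12) i q) i = (A11 * (A11⁻¹ * A12)) i q := rfl
    rw [this, Matrix.mul_nonsing_inv_cancel_left _ _ hinv]
    rfl
  · rfl

lemma both_swap {k m' n' : ℕ}
    (A11 : Matrix (Fin k) (Fin k) ℝ) (A12 : Matrix (Fin k) (Fin n') ℝ)
    (A21 : Matrix (Fin m') (Fin k) ℝ) (A22 : Matrix (Fin m') (Fin n') ℝ)
    (hinv : IsUnit A11.det) (a b : Fin k) (p : Fin m') (q : Fin n') :
    ((Matrix.fromBlocks A11 A12 A21 A22).submatrix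
      (Function.update Sum.inl b (Sum.inr p)) (Function.update Sum.inl a (Sum.inr q))).det
      = A11.det * ((A21 * A11⁻¹) p b * (A11⁻¹ * A12) a q
        + (A22 - A21 * A11⁻¹ * A12) p q * A11⁻¹ a b) := by
  set W := (1 : Matrix (Fin k) (Fin k) ℝ).updateRow b ((A21 * A11⁻¹) p) with hW
  set Z := (1 : Matrix (Fin k) (Fin k) ℝ).updateCol a (fun i => (A11⁻¹ * A12) i q) with hZ
  set s := (A22 - A21 * A11⁻¹ * A12) p q with hs
  have hAZ : A11 * Z = A11.updateCol a (fun i => A12 i q) := by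
    rw [hZ, Matrix.mul_updateCol, Matrix.mul_one]
    congr 1
    funext i
    have : (A11 *ᵥ fun i => (A11⁻¹ * A12) i q) i = (A11 * (A11⁻¹ * A12)) i q := rfl
    rw [this, Matrix.mul_nonsing_inv_cancel_left _ _ hinv]
  have hD : (Matrix.fromBlocks A11 A12 A21 A22).submatrix
      (Function.update Sum.inl b (Sum.inr p)) (Function.update Sum.inl a (Sum.inr q))
      = (W * A11 * Z).updateRow b ((W * A11 * Z) b + s • Pi.single a 1) := by
    have hM : W * A11 * Z = (A11 * Z).updateRow b ((A21 * A11⁻¹) p ᵥ* (A11 * Z)) := by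
      rw [Matrix.mul_assoc, hW, Matrix.updateRow_mul, Matrix.one_mul]
    rw [hM, Matrix.updateRow_idem, Matrix.updateRow_self]
    ext i j
    rw [Matrix.updateRow_apply, Matrix.submatrix_apply, Function.update_apply]
    by_cases hi : i = b
    · rw [if_pos hi, if_pos hi, Function.update_apply, Pi.add_apply, hAZ,
        Matrix.vecMul_updateCol, Function.update_apply]
      by_cases hj : j = a
      · rw [if_pos hj, if_pos hj, hj]
        have : ((A21 * A11⁻¹) p ⬝ᵥ fun i => A12 i q) = (A21 * A11⁻¹ * A12) p q := rfl
        rw [this]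
        simp [hs]
      · rw [if_neg hj, if_neg hj, ← Matrix.mul_apply_eq_vecMul,
          Matrix.nonsing_inv_mul_cancel_right _ _ hinv]
        simp [hj]
    · rw [if_neg hi, if_neg hi, Function.update_apply, hAZ, Matrix.updateCol_apply]
      split_ifs <;> rfl
  have hadj : (W * A11 * Z).adjugate a b = A11.adjugate a b := by
    rw [Matrix.adjugate_mul_distrib, Matrix.adjugate_mul_distrib, Matrix.mul_apply]
    simp only [hZ, adj_Z, ite_mul, one_mul, zero_mul, Finset.sum_ite_eq, Finset.mem_univ, if_true]
    rw [Matrix.mul_apply]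
    simp only [hW, adj_W, mul_ite, mul_one, mul_zero, Finset.sum_ite_eq', Finset.mem_univ, if_true]
  have hai : A11.adjugate a b = A11.det * A11⁻¹ a b := by
    rw [Matrix.inv_def, Matrix.smul_apply, smul_eq_mul, ← mul_assoc,
      Ring.mul_inverse_cancel _ hinv, one_mul]
  rw [hD, Matrix.det_updateRow_add, Matrix.updateRow_eq_self, Matrix.det_updateRow_smul,
    ← Matrix.adjugate_apply, hadj, hai, Matrix.det_mul, Matrix.det_mul, hW, hZ, det_W, det_Z]
  ring

lemma le_sval_block {k m' n' : ℕ}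
    (A11 : Matrix (Fin k) (Fin k) ℝ) (A12 : Matrix (Fin k) (Fin n') ℝ)
    (A21 : Matrix (Fin m') (Fin k) ℝ) (A22 : Matrix (Fin m') (Fin n') ℝ)
    (hinv : IsUnit A11.det) (c : ℝ) (hc : 0 < c) (h : ∀ i j, |A11⁻¹ i j| ≤ c)
    (j : ℕ) (hj : 1 ≤ j) (hjk : j ≤ k) :
    1 / (k * c) ≤ sval (Matrix.fromBlocks A11 A12 A21 A22) j := by
  have hk : (0 : ℝ) < k := by exact_mod_cast (by omega : 0 < k)
  apply le_sval _ _ hj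
  intro B hB
  have hr : (B.submatrix Sum.inl Sum.inl : Matrix (Fin k) (Fin k) ℝ).rank < k :=
    ((Matrix.rank_submatrix_le B Sum.inl Sum.inl).trans_lt hB).trans_le hjk
  have hd : (B.submatrix Sum.inl Sum.inl : Matrix (Fin k) (Fin k) ℝ).det = 0 := by
    by_contra h0
    have := Matrix.rank_of_isUnit _ ((Matrix.isUnit_iff_isUnit_det _).mpr (isUnit_iff_ne_zero.mpr h0))
    rw [this] at hr
    simp at hr
  obtain ⟨x, hx0, hx⟩ := Matrix.exists_mulVec_eq_zero_iff.mpr hd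
  have h1 : ‖WithLp.toLp 2 x‖ ≤ k * c * ‖WithLp.toLp 2 (A11 *ᵥ x)‖ := by
    have := norm_toEuclideanLin_le A11⁻¹ c hc.le h (WithLp.toLp 2 (A11 *ᵥ x))
    rw [Matrix.toLpLin_apply] at this
    simpa [Matrix.mulVec_mulVec, Matrix.nonsing_inv_mul _ hinv] using this
  let y : EuclideanSpace ℝ (Fin k ⊕ Fin n') := WithLp.toLp 2 (Sum.elim x 0)
  have hy : ‖y‖ = ‖(WithLp.toLp 2 x : EuclideanSpace ℝ (Fin k))‖ := by
    rw [EuclideanSpace.norm_eq, EuclideanSpace.norm_eq]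
    simp [y]
  have hxn : 0 < ‖(WithLp.toLp 2 x : EuclideanSpace ℝ (Fin k))‖ := by
    rw [norm_pos_iff]
    simpa using hx0
  apply le_specNorm _ _ y (by rw [← norm_pos_iff, hy]; exact hxn)
  have h2 : ‖(WithLp.toLp 2 (A11 *ᵥ x) : EuclideanSpace ℝ (Fin k))‖
      ≤ ‖Matrix.toEuclideanLin (Matrix.fromBlocks A11 A12 A21 A22 - B) y‖ := by
    apply le_of_sq_le_sq _ (norm_nonneg _)
    rw [EuclideanSpace.real_norm_sq_eq, EuclideanSpace.real_norm_sq_eq, Fintype.sum_sum_type]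
    have e : ∀ i, (Matrix.toEuclideanLin (Matrix.fromBlocks A11 A12 A21 A22 - B) y) (Sum.inl i)
        = (A11 *ᵥ x) i := by
      intro i
      have hxi := congrFun hx i
      rw [Matrix.toLpLin_apply]
      simp only [y, Matrix.sub_mulVec, Pi.sub_apply]
      simp only [Matrix.mulVec, dotProduct, Fintype.sum_sum_type, Matrix.fromBlocks_apply₁₁,
        Sum.elim_inl, Sum.elim_inr, Pi.zero_apply, mul_zero, Finset.sum_const_zero, add_zero,
        Matrix.submatrix_apply] at hxi ⊢
      rw [hxi, sub_zero]
    simp only [e]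
    have : 0 ≤ ∑ i, (Matrix.toEuclideanLin (Matrix.fromBlocks A11 A12 A21 A22 - B) y) (Sum.inr i) ^ 2 :=
      Finset.sum_nonneg fun i _ => sq_nonneg _
    linarith
  rw [hy, one_div, inv_mul_le_iff₀ (by positivity)]
  refine h1.trans ?_
  gcongr

theorem statement_1 {k m' n' : ℕ}
    (A11 : Matrix (Fin k) (Fin k) ℝ) (A12 : Matrix (Fin k) (Fin n') ℝ)
    (A21 : Matrix (Fin m') (Fin k) ℝ) (A22 : Matrix (Fin m') (Fin n') ℝ)
    (hinv : IsUnit A11.det)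
    (hpos : 0 < vol A11)
    (hmax : ∀ (r : Fin k → Fin k ⊕ Fin m') (c : Fin k → Fin k ⊕ Fin n'),
      DiffOne Sum.inl r → DiffOne Sum.inl c →
      vol ((Matrix.fromBlocks A11 A12 A21 A22).submatrix r c) ≤ vol A11) :
    ∀ j : ℕ, 1 ≤ j → j ≤ k →
      (1 / (1 + 5 * k * Real.sqrt ((k + m') * (k + n')))) *
          sval (Matrix.fromBlocks A11 A12 A21 A22) j ≤
        sval (Matrix.fromBlocks A11 A12 A21 (A21 * A11⁻¹ * A12)) j ∧
      sval (Matrix.fromBlocks A11 A12 A21 (A21 * A11⁻¹ * A12)) j ≤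
        (1 + 5 * k * Real.sqrt ((k + m') * (k + n'))) *
          sval (Matrix.fromBlocks A11 A12 A21 A22) j := by
  intro j hj hjk
  have hk : 0 < k := by omega
  have hkR : (0 : ℝ) < k := by exact_mod_cast hk
  have : Nonempty (Fin k × Fin k) := ⟨(⟨0, hk⟩, ⟨0, hk⟩)⟩
  have hdet : 0 < |A11.det| := abs_pos.mpr hinv.ne_zero
  simp only [vol_eq] at hmax
  obtain ⟨⟨a, b⟩, hab⟩ := Finite.exists_max (fun ij : Fin k × Fin k => |A11⁻¹ ij.1 ij.2|)
  set μ := |A11⁻¹ a b| with hμ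
  have hμmax : ∀ i l, |A11⁻¹ i l| ≤ μ := fun i l => hab (i, l)
  have hμpos : 0 < μ := by
    by_contra h0
    have hz : A11⁻¹ = 0 := by
      ext i l
      have := hμmax i l
      exact abs_eq_zero.mp (le_antisymm (by linarith) (abs_nonneg _))
    have h1 := Matrix.mul_nonsing_inv A11 hinv
    rw [hz, Matrix.mul_zero] at h1
    have := congrFun (congrFun h1 a) a
    simp at this
  have hw : ∀ p, |(A21 * A11⁻¹) p b| ≤ 1 := by
    intro p
    have := hmax _ _ (diffOne_update b p) diffOne_self
    rw [row_swap _ _ _ _ hinv, abs_mul] at this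
    exact le_of_mul_le_mul_right (by linarith) hdet
  have hz : ∀ q, |(A11⁻¹ * A12) a q| ≤ 1 := by
    intro q
    have := hmax _ _ diffOne_self (diffOne_update a q)
    rw [col_swap _ _ _ _ hinv, abs_mul] at this
    exact le_of_mul_le_mul_left (by linarith) hdet
  have hS : ∀ p q, |(A22 - A21 * A11⁻¹ * A12) p q| ≤ 2 / μ := by
    intro p q
    have := hmax _ _ (diffOne_update b p) (diffOne_update a q)
    rw [both_swap _ _ _ _ hinv, abs_mul] at this
    have h1 := le_of_mul_le_mul_left (this.trans_eq (mul_one _).symm) hdet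
    have h2 : |(A21 * A11⁻¹) p b * (A11⁻¹ * A12) a q| ≤ 1 := by
      rw [abs_mul]
      exact mul_le_one₀ (hw p) (abs_nonneg _) (hz q)
    rw [le_div_iff₀ hμpos, hμ, ← abs_mul]
    rw [abs_le] at *
    constructor <;> linarith
  set A := Matrix.fromBlocks A11 A12 A21 A22 with hA
  set C := Matrix.fromBlocks A11 A12 A21 (A21 * A11⁻¹ * A12) with hC
  set t := Real.sqrt ((k + m') * (k + n')) with ht
  have ht0 : 0 ≤ t := Real.sqrt_nonneg _
  have hAC : A - C = Matrix.fromBlocks 0 0 0 (A22 - A21 * A11⁻¹ * A12) := by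
    ext (i | i) (l | l) <;> simp [hA, hC]
  have hent : ∀ i l, |(A - C) i l| ≤ 2 / μ := by
    have : 0 ≤ 2 / μ := by positivity
    rw [hAC]
    rintro (i | i) (l | l) <;> first | exact hS i l | simpa using this
  have hbound : ∀ D : Matrix (Fin k ⊕ Fin m') (Fin k ⊕ Fin n') ℝ, (∀ i l, |D i l| ≤ 2 / μ) →
      specNorm D ≤ t * (2 / μ) := by
    intro D hD
    apply specNorm_le _ _ (by positivity)
    intro x
    have := norm_toEuclideanLin_le D (2 / μ) (by positivity) hD x
    simpa [ht] using this
  have hN1 := hbound (A - C) hent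
  have hN2 := hbound (C - A) (fun i l => by
    have := hent i l
    rw [Matrix.sub_apply] at this ⊢
    rwa [abs_sub_comm])
  have hsA := le_sval_block A11 A12 A21 A22 hinv μ hμpos hμmax j hj hjk
  have hsC := le_sval_block A11 A12 A21 (A21 * A11⁻¹ * A12) hinv μ hμpos hμmax j hj hjk
  rw [← hA] at hsA
  rw [← hC] at hsC
  have hconv : t * (2 / μ) = 2 * k * t * (1 / (k * μ)) := by
    field_simp
  have hpos' : 0 < 1 / (k * μ) := by positivity
  have hfin : ∀ y, 1 / (k * μ) ≤ y → y + t * (2 / μ) ≤ (1 + 5 * k * t) * y := by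
    intro y hy
    rw [hconv]
    have h1 : 2 * k * t * (1 / (k * μ)) ≤ 2 * k * t * y := by gcongr
    have h2 : 0 ≤ k * t * y := mul_nonneg (by positivity) (hpos'.le.trans hy)
    nlinarith
  have p1 := sval_perturb A C j hj
  have p2 := sval_perturb C A j hj
  have f1 := hfin _ hsC
  have f2 := hfin _ hsA
  constructor
  · rw [one_div, inv_mul_le_iff₀ (by positivity)]
    linarith
  · linarith
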